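/- arXiv:2504.12478 — 2 statements merged into one kernel-verified Lean document; each statement's English description precedes it below -/
import Mathlib

section
/- Let X and Y be centered Gaussian random vectors in R^k with covariance matrices Σ^X and Σ^Y respectively, i.e. X ~ N(0, Σ^X) and Y ~ N(0, Σ^Y). Assume that for all 1 ≤ i, j ≤ k one has 2|Σ^X_{ij} − Σ^Y_{ij}| ≤ (Σ^Y_{ii} − Σ^X_{ii}) + (Σ^Y_{jj} − Σ^X_{jj}). Then for every real m ≥ 1, E[(max_{1≤i≤k} |X_i|)^m] ≤ E[(max_{1≤i≤k} |Y_i|)^m]. -/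
open MeasureTheory ProbabilityTheory Real
open scoped NNReal BigOperators

/-- A random vector `X` on `(Ω, P)` is a centered Gaussian random vector if every
linear combination of its coordinates is a centered real Gaussian random variable. -/
def IsCenteredGaussianVec {Ω : Type*} [MeasurableSpace Ω] {k : ℕ}
    (P : Measure Ω) (X : Ω → Fin k → ℝ) : Prop :=
  ∀ a : Fin k → ℝ,
    Measure.map (fun ω => ∑ i, a i * X ω i) P
      = gaussianReal 0 (variance (fun ω => ∑ i, a i * X ω i) P).toNNReal

/-!
Put `Z = (s X_i)` and `W = (s Y_i)`, where `i` runs over the coordinates and `s` over `{0, -1, 1}`.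
The hypothesis says exactly that `E (Z_p - Z_q)² ≤ E (W_p - W_q)²` for all `p, q`. By the
Sudakov–Fernique inequality `E max_p (c_p + Z_p) ≤ E max_p (c_p + W_p)` for every vector `c`; taking
`c = a` where `s = 0` and `c = 0` elsewhere gives `E max (a, max |X_i|) ≤ E max (a, max |Y_i|)`, and
`u ^ m` is a mixture of the functions `u ↦ max (u - a) 0`.

For Sudakov–Fernique, replace the maximum by the log-sum-exp function, whose Hessian in a direction
`v` is the variance of `v` under a softmax probability vector `p`, that is
`½ ∑ p_i p_j (v_i - v_j)²`. So over a short time the heat flow driven by `W` increases log-sum-exp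
more than the one driven by `Z`, up to a cubic error. Composing many short steps, which is possible
because both flows are semigroups and commute, removes the error.
-/

section Calculus

lemma abs_le_of_abs_deriv_le {f f' B B' : ℝ → ℝ} (hf : ∀ t, HasDerivAt f (f' t) t)
    (hB : ∀ t, HasDerivAt B (B' t) t) (h0 : |f 0| ≤ B 0) (h : ∀ t, 0 ≤ t → |f' t| ≤ B' t)
    {t : ℝ} (ht : 0 ≤ t) : |f t| ≤ B t :=
  image_norm_le_of_norm_deriv_right_le_deriv_boundary
    (fun s _ ↦ (hf s).continuousAt.continuousWithinAt) (fun s _ ↦ (hf s).hasDerivWithinAt)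
    h0 hB (fun s hs ↦ h s hs.1) (Set.right_mem_Icc.2 ht)

lemma abs_sub_taylor_two_le {f f₁ f₂ f₃ : ℝ → ℝ} {C : ℝ} (h₁ : ∀ t, HasDerivAt f (f₁ t) t)
    (h₂ : ∀ t, HasDerivAt f₁ (f₂ t) t) (h₃ : ∀ t, HasDerivAt f₂ (f₃ t) t)
    (hC : ∀ t, |f₃ t| ≤ C) {t : ℝ} (ht : 0 ≤ t) :
    |f t - (f 0 + t * f₁ 0 + t ^ 2 / 2 * f₂ 0)| ≤ t ^ 3 / 6 * C := by
  have linear (c t : ℝ) : HasDerivAt (fun t ↦ t * c) c t := by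
    simpa using (hasDerivAt_id t).mul_const c
  have quadratic (c t : ℝ) : HasDerivAt (fun t ↦ t ^ 2 / 2 * c) (t * c) t :=
    (((hasDerivAt_pow 2 t).div_const 2).mul_const c).congr_deriv (by simp)
  have cubic (c t : ℝ) : HasDerivAt (fun t ↦ t ^ 3 / 6 * c) (t ^ 2 / 2 * c) t :=
    (((hasDerivAt_pow 3 t).div_const 6).mul_const c).congr_deriv (by push_cast; ring)
  have order_zero {t : ℝ} (ht : 0 ≤ t) : |f₂ t - f₂ 0| ≤ t * C :=
    abs_le_of_abs_deriv_le (fun t ↦ (h₃ t).sub_const (f₂ 0)) (linear C) (by simp)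
      (fun t _ ↦ hC t) ht
  have order_one {t : ℝ} (ht : 0 ≤ t) : |f₁ t - (f₁ 0 + t * f₂ 0)| ≤ t ^ 2 / 2 * C :=
    abs_le_of_abs_deriv_le (fun t ↦ (h₂ t).sub ((linear (f₂ 0) t).const_add (f₁ 0)))
      (quadratic C) (by simp) (fun _ ↦ order_zero) ht
  exact abs_le_of_abs_deriv_le
    (fun t ↦ (h₁ t).sub (((linear (f₁ 0) t).const_add (f 0)).add (quadratic (f₂ 0) t)))
    (cubic C) (by simp) (fun _ ↦ order_one) ht

end Calculus

section Smoothing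

lemma integrable_lipschitz_comp {E Ω : Type*} [NormedAddCommGroup E] [MeasurableSpace Ω]
    {P : Measure Ω} [IsFiniteMeasure P] {F : E → ℝ} {K : ℝ≥0} (hF : LipschitzWith K F) {X : Ω → E}
    (hX : Integrable X P) : Integrable (fun ω ↦ F (X ω)) P := by
  have hsub : LipschitzWith K (fun x ↦ F x - F 0) := fun x y ↦ by
    simpa [edist_sub_right] using hF x y
  have h := memLp_one_iff_integrable.1
    (hsub.comp_memLp (by simp) (memLp_one_iff_integrable.2 hX))
  exact (h.add (integrable_const (F 0))).congr (.of_forall fun ω ↦ by simp)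

variable {E : Type*} [NormedAddCommGroup E] [NormedSpace ℝ E] [MeasurableSpace E]

/-- The average of `F` over the translate by `z` and dilate by `a` of the measure `μ`: the value
at `z` of the heat semigroup at time `a ^ 2`, applied to `F`, when `μ` is a centered Gaussian
measure. -/
noncomputable def smoothing (μ : Measure E) (a : ℝ) (F : E → ℝ) (z : E) : ℝ :=
  ∫ x, F (z + a • x) ∂μ

variable {μ ν : Measure E} [IsProbabilityMeasure μ] [IsProbabilityMeasure ν] {F G : E → ℝ}
  {K K' : ℝ≥0} {a b : ℝ}

lemma integrable_comp_add_smul (hμ : Integrable id μ) (hF : LipschitzWith K F) (a : ℝ) (z : E) :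
    Integrable (fun x ↦ F (z + a • x)) μ :=
  integrable_lipschitz_comp hF ((integrable_const z).add (hμ.smul a))

lemma integrable_comp_add_smul_add_smul (hμ : Integrable id μ) (hν : Integrable id ν)
    (hF : LipschitzWith K F) (a b : ℝ) (z : E) :
    Integrable (fun p : E × E ↦ F (z + a • p.1 + b • p.2)) (μ.prod ν) :=
  integrable_lipschitz_comp hF
    (((integrable_const z).add ((hμ.comp_fst ν).smul a)).add ((hν.comp_snd μ).smul b))

lemma lipschitzWith_smoothing (hμ : Integrable id μ) (hF : LipschitzWith K F) (a : ℝ) :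
    LipschitzWith K (smoothing μ a F) := by
  refine LipschitzWith.of_dist_le_mul fun x y ↦ ?_
  rw [smoothing, smoothing, Real.dist_eq, ← integral_sub (integrable_comp_add_smul hμ hF a x)
    (integrable_comp_add_smul hμ hF a y)]
  have hdist (v : E) : ‖F (x + a • v) - F (y + a • v)‖ ≤ K * dist x y := by
    simpa [dist_eq_norm] using hF.dist_le_mul (x + a • v) (y + a • v)
  simpa using norm_integral_le_of_norm_le_const (μ := μ) (.of_forall hdist)

lemma smoothing_le_smoothing_add (hμ : Integrable id μ) (hF : LipschitzWith K F)
    (hG : LipschitzWith K' G) {c : ℝ} (h : ∀ z, F z ≤ G z + c) (a : ℝ) (z : E) :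
    smoothing μ a F z ≤ smoothing μ a G z + c := by
  have hGc := integrable_comp_add_smul hμ hG a z
  calc smoothing μ a F z ≤ ∫ x, (G (z + a • x) + c) ∂μ :=
        integral_mono (integrable_comp_add_smul hμ hF a z) (hGc.add (integrable_const c))
          fun x ↦ h _
    _ = smoothing μ a G z + c := by
        rw [integral_add hGc (integrable_const c), integral_const, probReal_univ, one_smul,
          smoothing]

lemma smoothing_comm (hμ : Integrable id μ) (hν : Integrable id ν) (hF : LipschitzWith K F)
    (a b : ℝ) : smoothing μ a (smoothing ν b F) = smoothing ν b (smoothing μ a F) := by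
  ext z
  unfold smoothing
  rw [integral_integral_swap (integrable_comp_add_smul_add_smul hμ hν hF a b z)]
  simp only [add_right_comm]

lemma abs_smoothing_sub_le_of_taylor [CompleteSpace E] (hμ : MemLp id 3 μ) (hμ₀ : μ[id] = 0)
    (hF : LipschitzWith K F) {z : E} {L : StrongDual ℝ E} {Q : E → ℝ} {C : ℝ}
    (hQ : Integrable Q μ) (hQ_smul : ∀ (a : ℝ) v, Q (a • v) = a ^ 2 * Q v)
    (hTaylor : ∀ v, |F (z + v) - (F z + L v + Q v)| ≤ C * ‖v‖ ^ 3) (ha : 0 ≤ a) :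
    |smoothing μ a F z - (F z + a ^ 2 * ∫ v, Q v ∂μ)| ≤ a ^ 3 * (C * ∫ v, ‖v‖ ^ 3 ∂μ) := by
  have hid : Integrable id μ := hμ.integrable (by norm_num)
  have hFint := integrable_comp_add_smul hid hF a z
  have hLint : Integrable (fun v ↦ L (a • v)) μ := L.integrable_comp (hid.smul a)
  have hlin : Integrable (fun v ↦ F z + L (a • v)) μ := (integrable_const _).add hLint
  have hQint : Integrable (fun v ↦ a ^ 2 * Q v) μ := hQ.const_mul _
  have hLzero : ∫ v, L (a • v) ∂μ = 0 := by
    simp only [map_smul, integral_smul]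
    rw [L.integral_comp_id_comm' hid, hμ₀, map_zero, smul_zero]
  have htaylor : Integrable (fun v ↦ F z + L (a • v) + a ^ 2 * Q v) μ := hlin.add hQint
  have hcube : Integrable (fun v ↦ a ^ 3 * (C * ‖v‖ ^ 3)) μ :=
    ((hμ.integrable_norm_pow three_ne_zero).const_mul C).const_mul _
  calc |smoothing μ a F z - (F z + a ^ 2 * ∫ v, Q v ∂μ)|
      = |∫ v, (F (z + a • v) - (F z + L (a • v) + a ^ 2 * Q v)) ∂μ| := by
        rw [integral_sub hFint htaylor, integral_add hlin hQint,
          integral_add (integrable_const _) hLint, hLzero, integral_const, probReal_univ, one_smul,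
          add_zero, integral_const_mul, smoothing]
    _ ≤ ∫ v, a ^ 3 * (C * ‖v‖ ^ 3) ∂μ := by
        rw [← Real.norm_eq_abs]
        refine norm_integral_le_of_norm_le hcube (.of_forall fun v ↦ ?_)
        convert hTaylor (a • v) using 1
        · rw [hQ_smul, Real.norm_eq_abs]
        · rw [norm_smul, Real.norm_of_nonneg ha]
          ring
    _ = a ^ 3 * (C * ∫ v, ‖v‖ ^ 3 ∂μ) := by rw [integral_const_mul, integral_const_mul]

end Smoothing

section HeatFlow

variable {E : Type*} [NormedAddCommGroup E] [NormedSpace ℝ E] [CompleteSpace E]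
  [SecondCountableTopology E] [MeasurableSpace E] [BorelSpace E]
  {μ ν : Measure E} [IsGaussian μ] [IsGaussian ν] {F : E → ℝ} {K : ℝ≥0}

lemma smoothing_smoothing (hμ₀ : μ[id] = 0) (hF : LipschitzWith K F) (a b : ℝ) :
    smoothing μ a (smoothing μ b F) = smoothing μ √(a ^ 2 + b ^ 2) F := by
  -- With `(a, b) = r (cos θ, sin θ)`, use that rotations by `θ` preserve `μ.prod μ`.
  ext z
  set r := √(a ^ 2 + b ^ 2)
  set θ := Complex.arg ⟨a, b⟩
  have hr : ‖(⟨a, b⟩ : ℂ)‖ = r := by rw [Complex.norm_def, Complex.normSq_mk, ← sq, ← sq]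
  have hcos : r * cos θ = a := hr ▸ Complex.norm_mul_cos_arg _
  have hsin : r * sin θ = b := hr ▸ Complex.norm_mul_sin_arg _
  have hμ := IsGaussian.integrable_id (μ := μ)
  have hcont := hF.continuous
  calc ∫ x, ∫ y, F (z + a • x + b • y) ∂μ ∂μ
      = ∫ p, F (z + a • p.1 + b • p.2) ∂(μ.prod μ) :=
        integral_integral (integrable_comp_add_smul_add_smul hμ hμ hF a b z)
    _ = ∫ p, F (z + r • (ContinuousLinearMap.rotation θ p).1) ∂(μ.prod μ) := by
        simp only [ContinuousLinearMap.rotation_apply, smul_add, smul_smul, hcos, hsin, add_assoc]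
    _ = ∫ p, F (z + r • p.1) ∂((μ.prod μ).map (ContinuousLinearMap.rotation θ)) := by
        rw [integral_map (by fun_prop) (by fun_prop)]
    _ = smoothing μ r F z := by
        rw [IsGaussian.map_rotation_eq_self hμ₀, integral_fun_fst (fun x ↦ F (z + r • x)),
          probReal_univ, one_smul, smoothing]

lemma smoothing_sqrt_natCast_mul_le (hμ₀ : μ[id] = 0) (hν₀ : ν[id] = 0) (hF : LipschitzWith K F)
    {a c : ℝ} (ha : 0 ≤ a) (h : ∀ z, smoothing μ a F z ≤ smoothing ν a F z + c) (n : ℕ) (z : E) :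
    smoothing μ (√n * a) F z ≤ smoothing ν (√n * a) F z + n * c := by
  have hμ := IsGaussian.integrable_id (μ := μ)
  have hν := IsGaussian.integrable_id (μ := ν)
  induction n generalizing z with
  | zero => simp [smoothing]
  | succ n ih =>
    have hsqrt : √((n + 1 : ℕ) : ℝ) * a = √((√n * a) ^ 2 + a ^ 2) := by
      rw [mul_pow, Real.sq_sqrt n.cast_nonneg, ← add_one_mul, Real.sqrt_mul (by positivity),
        Real.sqrt_sq ha, Nat.cast_succ]
    set b := √n * a
    calc smoothing μ (√((n + 1 : ℕ) : ℝ) * a) F z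
        = smoothing μ b (smoothing μ a F) z := by rw [hsqrt, smoothing_smoothing hμ₀ hF]
      _ ≤ smoothing μ b (smoothing ν a F) z + c :=
          smoothing_le_smoothing_add hμ (lipschitzWith_smoothing hμ hF a)
            (lipschitzWith_smoothing hν hF a) h b z
      _ = smoothing ν a (smoothing μ b F) z + c := by rw [smoothing_comm hμ hν hF]
      _ ≤ smoothing ν a (smoothing ν b F) z + n * c + c := by
          gcongr
          exact smoothing_le_smoothing_add hν (lipschitzWith_smoothing hμ hF b)
            (lipschitzWith_smoothing hν hF b) ih a z
      _ = smoothing ν (√((n + 1 : ℕ) : ℝ) * a) F z + (n + 1 : ℕ) * c := by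
          rw [hsqrt, add_comm (b ^ 2), smoothing_smoothing hν₀ hF]
          push_cast
          ring

lemma smoothing_le_smoothing_of_cubic_error (hμ₀ : μ[id] = 0) (hν₀ : ν[id] = 0)
    (hF : LipschitzWith K F) {C : ℝ}
    (h : ∀ a, 0 ≤ a → ∀ z, smoothing μ a F z ≤ smoothing ν a F z + a ^ 3 * C)
    {b : ℝ} (hb : 0 ≤ b) (z : E) : smoothing μ b F z ≤ smoothing ν b F z := by
  -- `n + 1` steps of length `b / √(n + 1)` have total error of order `(n + 1) ^ (-1 / 2)`.
  have hsteps (n : ℕ) :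
      smoothing μ b F z ≤ smoothing ν b F z + b ^ 3 * C * √(1 / ((n : ℝ) + 1)) := by
    set s := √(1 / ((n : ℝ) + 1))
    have hs : ((n : ℝ) + 1) * s ^ 2 = 1 := by
      rw [Real.sq_sqrt (by positivity)]
      field_simp
    have hsqrt : √((n + 1 : ℕ) : ℝ) * (s * b) = b := by
      rw [← mul_assoc, ← Real.sqrt_mul (by positivity)]
      push_cast
      rw [mul_one_div_cancel (by positivity), Real.sqrt_one, one_mul]
    have hsum := smoothing_sqrt_natCast_mul_le hμ₀ hν₀ hF (by positivity)
      (h (s * b) (by positivity)) (n + 1) z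
    rw [hsqrt] at hsum
    refine hsum.trans_eq (congrArg (smoothing ν b F z + ·) ?_)
    push_cast
    linear_combination b ^ 3 * C * s * hs
  have hlim : Filter.Tendsto (fun n : ℕ ↦ smoothing ν b F z + b ^ 3 * C * √(1 / ((n : ℝ) + 1)))
      Filter.atTop (nhds (smoothing ν b F z + b ^ 3 * C * √0)) :=
    ((tendsto_one_div_add_atTop_nhds_zero_nat.sqrt).const_mul _).const_add _
  simpa using ge_of_tendsto' hlim hsteps

theorem smoothing_le_smoothing_of_integral_quadratic_le (hμ₀ : μ[id] = 0) (hν₀ : ν[id] = 0)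
    (hF : LipschitzWith K F) {L : E → StrongDual ℝ E} {Q : E → E → ℝ} {C : ℝ}
    (hQ_smul : ∀ z (a : ℝ) v, Q z (a • v) = a ^ 2 * Q z v)
    (hTaylor : ∀ z v, |F (z + v) - (F z + L z v + Q z v)| ≤ C * ‖v‖ ^ 3)
    (hQμ : ∀ z, Integrable (Q z) μ) (hQν : ∀ z, Integrable (Q z) ν)
    (hQ : ∀ z, ∫ v, Q z v ∂μ ≤ ∫ v, Q z v ∂ν) {b : ℝ} (hb : 0 ≤ b) (z : E) :
    smoothing μ b F z ≤ smoothing ν b F z := by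
  refine smoothing_le_smoothing_of_cubic_error hμ₀ hν₀ hF
    (C := C * ∫ v, ‖v‖ ^ 3 ∂μ + C * ∫ v, ‖v‖ ^ 3 ∂ν) (fun a ha z ↦ ?_) hb z
  have hμ := abs_smoothing_sub_le_of_taylor (IsGaussian.memLp_id μ 3 (by simp)) hμ₀ hF (hQμ z)
    (hQ_smul z) (hTaylor z) ha
  have hν := abs_smoothing_sub_le_of_taylor (IsGaussian.memLp_id ν 3 (by simp)) hν₀ hF (hQν z)
    (hQ_smul z) (hTaylor z) ha
  have hle := mul_le_mul_of_nonneg_left (hQ z) (sq_nonneg a)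
  linarith [(abs_le.1 hμ).2, (abs_le.1 hν).1]

end HeatFlow

section LogSumExp

variable {ι : Type*} [Fintype ι]

/-- The smooth maximum `log (∑ i, exp (x i))` of the coordinates of `x`. -/
noncomputable def logSumExp (x : ι → ℝ) : ℝ := log (∑ i, exp (x i))

/-- Integration against the probability vector proportional to `exp (w i)` (the softmax of `w`). -/
noncomputable def softmaxMean (w : ι → ℝ) : (ι → ℝ) →L[ℝ] ℝ :=
  (∑ i, exp (w i))⁻¹ • ∑ i, exp (w i) • ContinuousLinearMap.proj i

/-- The variance of `v` under the softmax of `w`. -/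
noncomputable def softmaxVariance (w v : ι → ℝ) : ℝ :=
  softmaxMean w (v ^ 2) - softmaxMean w v ^ 2

lemma softmaxMean_apply (w f : ι → ℝ) :
    softmaxMean w f = (∑ i, exp (w i) * f i) / ∑ i, exp (w i) := by
  simp [softmaxMean, div_eq_inv_mul]

lemma softmaxMean_mono (w : ι → ℝ) {f g : ι → ℝ} (h : ∀ i, f i ≤ g i) :
    softmaxMean w f ≤ softmaxMean w g := by
  simp only [softmaxMean_apply]
  gcongr with i
  exact h i

lemma softmaxVariance_smul (w : ι → ℝ) (a : ℝ) (v : ι → ℝ) :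
    softmaxVariance w (a • v) = a ^ 2 * softmaxVariance w v := by
  simp only [softmaxVariance, smul_pow, map_smul, smul_eq_mul]
  ring

lemma integral_softmaxMean {Ω : Type*} [MeasurableSpace Ω] {P : Measure Ω} (w : ι → ℝ)
    {f : Ω → ι → ℝ} (hf : ∀ i, Integrable (fun ω ↦ f ω i) P) :
    ∫ ω, softmaxMean w (f ω) ∂P = softmaxMean w (fun i ↦ ∫ ω, f ω i ∂P) := by
  rw [(softmaxMean w).integral_comp_comm (Integrable.of_eval hf)]
  exact congrArg _ (funext fun i ↦ eval_integral hf i)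

lemma hasDerivAt_sum_exp_mul (w v f : ι → ℝ) (t : ℝ) :
    HasDerivAt (fun t : ℝ ↦ ∑ i, exp ((w + t • v) i) * f i)
      (∑ i, exp ((w + t • v) i) * (f * v) i) t := by
  refine HasDerivAt.fun_sum fun i _ ↦ ?_
  have hlin : HasDerivAt (fun t : ℝ ↦ w i + t * v i) (v i) t := by
    simpa using ((hasDerivAt_id t).mul_const (v i)).const_add (w i)
  exact (hlin.exp.mul_const (f i)).congr_deriv (by simp [mul_assoc, mul_comm (f i)])

variable [Nonempty ι]

lemma sum_exp_pos (x : ι → ℝ) : 0 < ∑ i, exp (x i) :=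
  Finset.sum_pos (fun i _ ↦ exp_pos (x i)) Finset.univ_nonempty

lemma hasDerivAt_logSumExp (w v : ι → ℝ) (t : ℝ) :
    HasDerivAt (fun t : ℝ ↦ logSumExp (w + t • v)) (softmaxMean (w + t • v) v) t := by
  have hsum := hasDerivAt_sum_exp_mul w v 1 t
  simp only [Pi.one_apply, mul_one, one_mul] at hsum
  rw [softmaxMean_apply]
  exact hsum.log (sum_exp_pos _).ne'

lemma hasDerivAt_softmaxMean (w v f : ι → ℝ) (t : ℝ) :
    HasDerivAt (fun t : ℝ ↦ softmaxMean (w + t • v) f)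
      (softmaxMean (w + t • v) (f * v) - softmaxMean (w + t • v) f * softmaxMean (w + t • v) v)
      t := by
  have hsum := hasDerivAt_sum_exp_mul w v 1 t
  simp only [Pi.one_apply, mul_one, one_mul] at hsum
  have hZ := (sum_exp_pos (w + t • v)).ne'
  simp only [softmaxMean_apply]
  refine ((hasDerivAt_sum_exp_mul w v f t).div hsum hZ).congr_deriv ?_
  field_simp

lemma hasDerivAt_softmaxVariance (w v : ι → ℝ) (t : ℝ) :
    HasDerivAt (fun t : ℝ ↦ softmaxVariance (w + t • v) v)
      (softmaxMean (w + t • v) (v ^ 3)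
        - 3 * softmaxMean (w + t • v) v * softmaxMean (w + t • v) (v ^ 2)
        + 2 * softmaxMean (w + t • v) v ^ 3) t := by
  refine ((hasDerivAt_softmaxMean w v (v ^ 2) t).sub
    ((hasDerivAt_softmaxMean w v v t).pow 2)).congr_deriv ?_
  rw [← pow_succ, ← sq]
  push_cast
  ring

lemma softmaxMean_const (w : ι → ℝ) (c : ℝ) : softmaxMean w (fun _ ↦ c) = c := by
  rw [softmaxMean_apply, ← Finset.sum_mul, mul_div_cancel_left₀ _ (sum_exp_pos w).ne']

lemma abs_softmaxMean_le (w f : ι → ℝ) : |softmaxMean w f| ≤ ‖f‖ := by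
  have h (i : ι) := abs_le.1 (norm_le_pi_norm f i)
  exact abs_le.2
    ⟨(softmaxMean_const w (-‖f‖)).symm.trans_le (softmaxMean_mono w fun i ↦ (h i).1),
      (softmaxMean_mono w fun i ↦ (h i).2).trans_eq (softmaxMean_const w ‖f‖)⟩

lemma abs_softmaxMean_pow_le (w v : ι → ℝ) (n : ℕ) : |softmaxMean w (v ^ n)| ≤ ‖v‖ ^ n :=
  (abs_softmaxMean_le w _).trans (norm_pow_le v n)

lemma softmaxVariance_eq_softmaxMean_sub_sq (w v : ι → ℝ) :
    softmaxVariance w v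
      = softmaxMean w (fun i ↦ softmaxMean w (fun j ↦ (v i - v j) ^ 2)) / 2 := by
  have inner (i : ι) : softmaxMean w (fun j ↦ (v i - v j) ^ 2)
      = v i ^ 2 - 2 * softmaxMean w v * v i + softmaxMean w (v ^ 2) := by
    have : (fun j ↦ (v i - v j) ^ 2) = (fun _ ↦ v i ^ 2) - (2 * v i) • v + v ^ 2 := by
      ext j
      simp only [Pi.add_apply, Pi.sub_apply, Pi.smul_apply, Pi.pow_apply, smul_eq_mul]
      ring
    rw [this, map_add, map_sub, map_smul, softmaxMean_const, smul_eq_mul]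
    ring
  have outer : (fun i ↦ v i ^ 2 - 2 * softmaxMean w v * v i + softmaxMean w (v ^ 2))
      = v ^ 2 - (2 * softmaxMean w v) • v + fun _ ↦ softmaxMean w (v ^ 2) := rfl
  simp only [inner]
  rw [outer, map_add, map_sub, map_smul, softmaxMean_const, smul_eq_mul, softmaxVariance]
  ring

lemma abs_logSumExp_sub_taylor_le (w v : ι → ℝ) :
    |logSumExp (w + v) - (logSumExp w + softmaxMean w v + softmaxVariance w v / 2)|
      ≤ ‖v‖ ^ 3 := by
  have hvar (t : ℝ) : HasDerivAt (fun t : ℝ ↦ softmaxMean (w + t • v) v)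
      (softmaxVariance (w + t • v) v) t :=
    (hasDerivAt_softmaxMean w v v t).congr_deriv (by rw [softmaxVariance, sq, sq])
  have hthird (u : ι → ℝ) : |softmaxMean u (v ^ 3)
      - 3 * softmaxMean u v * softmaxMean u (v ^ 2) + 2 * softmaxMean u v ^ 3| ≤ 6 * ‖v‖ ^ 3 := by
    have hmean := abs_softmaxMean_le u v
    calc _ ≤ |softmaxMean u (v ^ 3)| + 3 * (|softmaxMean u v| * |softmaxMean u (v ^ 2)|)
          + 2 * |softmaxMean u v| ^ 3 := by
          refine (abs_add_le _ _).trans (add_le_add ((abs_sub _ _).trans_eq ?_) (le_of_eq ?_))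
          · simp [abs_mul, mul_assoc]
          · simp [abs_mul, abs_pow]
      _ ≤ ‖v‖ ^ 3 + 3 * (‖v‖ * ‖v‖ ^ 2) + 2 * ‖v‖ ^ 3 := by
          gcongr <;> exact abs_softmaxMean_pow_le u v _
      _ = 6 * ‖v‖ ^ 3 := by ring
  have htaylor := abs_sub_taylor_two_le (hasDerivAt_logSumExp w v) hvar
    (hasDerivAt_softmaxVariance w v) (fun t ↦ hthird (w + t • v)) zero_le_one
  simp only [one_smul, zero_smul, add_zero] at htaylor
  convert htaylor using 1 <;> ring_nf

lemma lipschitzWith_logSumExp : LipschitzWith 1 (logSumExp : (ι → ℝ) → ℝ) := by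
  refine LipschitzWith.of_le_add fun x y ↦ ?_
  rw [logSumExp, log_le_iff_le_exp (sum_exp_pos x), exp_add, logSumExp,
    exp_log (sum_exp_pos y), Finset.sum_mul]
  gcongr with i
  rw [← exp_add, exp_le_exp, ← sub_le_iff_le_add']
  exact (le_abs_self _).trans (dist_le_pi_dist x y i)

lemma iSup_le_logSumExp (x : ι → ℝ) : ⨆ i, x i ≤ logSumExp x :=
  ciSup_le fun i ↦ (le_log_iff_exp_le (sum_exp_pos x)).2 <|
    Finset.single_le_sum (f := fun i ↦ exp (x i)) (fun _ _ ↦ (exp_pos _).le) (Finset.mem_univ i)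

lemma logSumExp_le_iSup_add_log_card (x : ι → ℝ) :
    logSumExp x ≤ (⨆ i, x i) + log (Fintype.card ι) := by
  have hcard : (0 : ℝ) < Fintype.card ι := by exact_mod_cast Fintype.card_pos
  rw [logSumExp, log_le_iff_le_exp (sum_exp_pos x), exp_add, exp_log hcard, mul_comm]
  refine (Finset.sum_le_card_nsmul _ _ _ fun i _ ↦ ?_).trans_eq (nsmul_eq_mul _ _)
  exact exp_le_exp.2 (le_ciSup (Set.finite_range x).bddAbove i)

end LogSumExp

section SudakovFernique

variable {ι : Type*}

lemma integrable_eval_sub_sq [Finite ι] (μ : Measure (ι → ℝ)) [IsGaussian μ] (i j : ι) :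
    Integrable (fun x ↦ (x i - x j) ^ 2) μ := by
  cases nonempty_fintype ι
  have hmem := (IsGaussian.memLp_id μ 2 (by simp)).eval
  exact ((hmem i).sub (hmem j)).integrable_sq

lemma lipschitzWith_iSup [Fintype ι] [Nonempty ι] :
    LipschitzWith 1 (fun x : ι → ℝ ↦ ⨆ i, x i) := by
  refine LipschitzWith.of_le_add fun x y ↦ ciSup_le fun i ↦ ?_
  have hy := le_ciSup (Set.finite_range y).bddAbove i
  have hxy := (le_abs_self _).trans (dist_le_pi_dist x y i)
  linarith

lemma integrable_iSup_add [Finite ι] [Nonempty ι] (μ : Measure (ι → ℝ)) [IsGaussian μ]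
    (c : ι → ℝ) : Integrable (fun x ↦ ⨆ i, (c + x) i) μ := by
  cases nonempty_fintype ι
  exact integrable_lipschitz_comp lipschitzWith_iSup
    ((integrable_const c).add IsGaussian.integrable_id)

variable [Fintype ι] [Nonempty ι] {μ ν : Measure (ι → ℝ)} [IsGaussian μ] [IsGaussian ν]

lemma integral_softmaxVariance (μ : Measure (ι → ℝ)) [IsGaussian μ] (w : ι → ℝ) :
    ∫ x, softmaxVariance w x ∂μ
      = softmaxMean w (fun i ↦ softmaxMean w (fun j ↦ ∫ x, (x i - x j) ^ 2 ∂μ)) / 2 := by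
  have hint := integrable_eval_sub_sq μ
  simp only [softmaxVariance_eq_softmaxMean_sub_sq, integral_div]
  rw [integral_softmaxMean w fun i ↦ (softmaxMean w).integrable_comp (.of_eval (hint i))]
  simp only [integral_softmaxMean w (hint _)]

lemma integrable_softmaxVariance (μ : Measure (ι → ℝ)) [IsGaussian μ] (w : ι → ℝ) :
    Integrable (softmaxVariance w) μ := by
  have hint := integrable_eval_sub_sq μ
  simp only [funext (softmaxVariance_eq_softmaxMean_sub_sq w)]
  exact ((softmaxMean w).integrable_comp
    (.of_eval fun i ↦ (softmaxMean w).integrable_comp (.of_eval (hint i)))).div_const 2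

lemma smoothing_logSumExp_le (hμ₀ : μ[id] = 0) (hν₀ : ν[id] = 0)
    (h : ∀ i j, ∫ x, (x i - x j) ^ 2 ∂μ ≤ ∫ x, (x i - x j) ^ 2 ∂ν) {b : ℝ} (hb : 0 ≤ b)
    (z : ι → ℝ) : smoothing μ b logSumExp z ≤ smoothing ν b logSumExp z := by
  refine smoothing_le_smoothing_of_integral_quadratic_le hμ₀ hν₀ lipschitzWith_logSumExp
    (C := 1) (L := softmaxMean) (Q := fun w v ↦ softmaxVariance w v / 2)
    (fun w a v ↦ by rw [softmaxVariance_smul, mul_div_assoc])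
    (fun w v ↦ (abs_logSumExp_sub_taylor_le w v).trans_eq (one_mul _).symm)
    (fun w ↦ (integrable_softmaxVariance μ w).div_const 2)
    (fun w ↦ (integrable_softmaxVariance ν w).div_const 2) (fun w ↦ ?_) hb z
  simp only [integral_div, integral_softmaxVariance]
  gcongr
  exact softmaxMean_mono w fun i ↦ softmaxMean_mono w (h i)

lemma mul_integral_iSup_add_le_smoothing_logSumExp (μ : Measure (ι → ℝ)) [IsGaussian μ]
    (c : ι → ℝ) {b : ℝ} (hb : 0 ≤ b) :
    b * ∫ x, ⨆ i, (c + x) i ∂μ ≤ smoothing μ b logSumExp (b • c) := by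
  rw [← integral_const_mul]
  refine integral_mono ((integrable_iSup_add μ c).const_mul b)
    (integrable_comp_add_smul IsGaussian.integrable_id lipschitzWith_logSumExp b _) fun x ↦ ?_
  simp only [Real.mul_iSup_of_nonneg hb, ← smul_add]
  exact iSup_le_logSumExp (b • (c + x))

lemma smoothing_logSumExp_le_mul_integral_iSup_add (μ : Measure (ι → ℝ)) [IsGaussian μ]
    (c : ι → ℝ) {b : ℝ} (hb : 0 ≤ b) :
    smoothing μ b logSumExp (b • c)
      ≤ b * ∫ x, ⨆ i, (c + x) i ∂μ + log (Fintype.card ι) := by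
  have hsup := (integrable_iSup_add μ c).const_mul b
  calc smoothing μ b logSumExp (b • c)
      ≤ ∫ x, (b * (⨆ i, (c + x) i) + log (Fintype.card ι)) ∂μ := by
        refine integral_mono (integrable_comp_add_smul IsGaussian.integrable_id
          lipschitzWith_logSumExp b _) (hsup.add (integrable_const _)) fun x ↦ ?_
        simp only [Real.mul_iSup_of_nonneg hb, ← smul_add]
        exact logSumExp_le_iSup_add_log_card (b • (c + x))
    _ = b * ∫ x, ⨆ i, (c + x) i ∂μ + log (Fintype.card ι) := by
        rw [integral_add hsup (integrable_const _), integral_const_mul, integral_const,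
          probReal_univ, one_smul]

theorem integral_iSup_add_le_of_integral_sub_sq_le (hμ₀ : μ[id] = 0) (hν₀ : ν[id] = 0)
    (h : ∀ i j, ∫ x, (x i - x j) ^ 2 ∂μ ≤ ∫ x, (x i - x j) ^ 2 ∂ν) (c : ι → ℝ) :
    ∫ x, ⨆ i, (c + x) i ∂μ ≤ ∫ x, ⨆ i, (c + x) i ∂ν := by
  refine le_of_forall_pos_le_add fun ε hε ↦ ?_
  set b := (1 + log (Fintype.card ι)) / ε
  have hb : 0 < b := by positivity
  refine le_of_mul_le_mul_left ?_ hb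
  calc b * ∫ x, ⨆ i, (c + x) i ∂μ
      ≤ smoothing μ b logSumExp (b • c) :=
        mul_integral_iSup_add_le_smoothing_logSumExp μ c hb.le
    _ ≤ smoothing ν b logSumExp (b • c) := smoothing_logSumExp_le hμ₀ hν₀ h hb.le _
    _ ≤ b * ∫ x, ⨆ i, (c + x) i ∂ν + log (Fintype.card ι) :=
        smoothing_logSumExp_le_mul_integral_iSup_add ν c hb.le
    _ ≤ b * (∫ x, ⨆ i, (c + x) i ∂ν + ε) := by
        rw [mul_add, div_mul_cancel₀ _ hε.ne']
        linarith

end SudakovFernique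

section SignedCoordinates

variable {ι : Type*}

/-- The vector with entries `s * x i`, for `i : ι` and `s ∈ {0, -1, 1}`. -/
noncomputable def signedCoords : (ι → ℝ) →L[ℝ] (ι × SignType → ℝ) :=
  ContinuousLinearMap.pi fun p ↦ (p.2 : ℝ) • ContinuousLinearMap.proj p.1

lemma signedCoords_apply (x : ι → ℝ) (p : ι × SignType) :
    signedCoords x p = (p.2 : ℝ) * x p.1 := rfl

lemma integral_mul_eval_sub_mul_eval_sq [Finite ι] (μ : Measure (ι → ℝ)) [IsGaussian μ] (s t : ℝ)
    (i j : ι) :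
    ∫ x, (s * x i - t * x j) ^ 2 ∂μ
      = s ^ 2 * ∫ x, x i * x i ∂μ + t ^ 2 * ∫ x, x j * x j ∂μ
        - 2 * s * t * ∫ x, x i * x j ∂μ := by
  cases nonempty_fintype ι
  have hmem := (IsGaussian.memLp_id μ 2 (by simp)).eval
  have hint (i j : ι) : Integrable (fun x ↦ x i * x j) μ := (hmem i).integrable_mul (hmem j)
  have hi := (hint i i).const_mul (s ^ 2)
  have hj := (hint j j).const_mul (t ^ 2)
  have hsum : Integrable (fun x ↦ s ^ 2 * (x i * x i) + t ^ 2 * (x j * x j)) μ := hi.add hj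
  simp only [← integral_const_mul]
  rw [← integral_add hi hj, ← integral_sub hsum ((hint i j).const_mul _)]
  congr with x
  ring

variable {μ ν : Measure (ι → ℝ)} [IsGaussian μ] [IsGaussian ν]

lemma integral_signedCoords_sub_sq_le [Finite ι]
    (h : ∀ i j, 2 * |∫ x, x i * x j ∂μ - ∫ x, x i * x j ∂ν|
      ≤ ∫ x, x i * x i ∂ν - ∫ x, x i * x i ∂μ + (∫ x, x j * x j ∂ν - ∫ x, x j * x j ∂μ))
    (p q : ι × SignType) :
    ∫ x, (signedCoords x p - signedCoords x q) ^ 2 ∂μ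
      ≤ ∫ x, (signedCoords x p - signedCoords x q) ^ 2 ∂ν := by
  obtain ⟨i, s⟩ := p
  obtain ⟨j, t⟩ := q
  simp only [signedCoords_apply, integral_mul_eval_sub_mul_eval_sq]
  have hvar (i : ι) : ∫ x, x i * x i ∂μ ≤ ∫ x, x i * x i ∂ν := by
    linarith [h i i, abs_nonneg (∫ x, x i * x i ∂μ - ∫ x, x i * x i ∂ν)]
  have hcov := abs_le.1 ((le_div_iff₀' two_pos).2 (h i j))
  rcases s with _ | _ | _ <;> rcases t with _ | _ | _ <;>
    simp only [SignType.zero_eq_zero, SignType.neg_eq_neg_one, SignType.pos_eq_one,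
      SignType.coe_zero, SignType.coe_neg, SignType.coe_one] <;>
    linarith [hvar i, hvar j, hcov.1, hcov.2]

variable [Fintype ι]

lemma iSup_add_signedCoords_eq_max_norm [Nonempty ι] (a : ℝ) (x : ι → ℝ) :
    ⨆ p, ((fun p : ι × SignType ↦ if p.2 = 0 then a else 0) + signedCoords x) p
      = max a ‖x‖ := by
  have habs (i : ι) := abs_le.1 (norm_le_pi_norm x i)
  set y : ι × SignType → ℝ := (fun p ↦ if p.2 = 0 then a else 0) + signedCoords x
  have hy (p : ι × SignType) : y p = (if p.2 = 0 then a else 0) + p.2 * x p.1 := rfl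
  have hle := le_ciSup (Set.finite_range y).bddAbove
  refine le_antisymm (ciSup_le fun ⟨i, s⟩ ↦ ?_) (max_le ?_ ?_)
  · rw [hy]
    rcases s with _ | _ | _
    · simp
    · simpa using .inr (neg_le.1 (habs i).1)
    · simpa using .inr (habs i).2
  · exact le_of_eq_of_le (by simp [hy]) (hle (Classical.arbitrary ι, 0))
  · refine (pi_norm_le_iff_of_nonempty x).2 fun i ↦ abs_le'.2 ⟨?_, ?_⟩
    · exact le_of_eq_of_le (by simp [hy]) (hle (i, 1))
    · exact le_of_eq_of_le (by simp [hy]) (hle (i, -1))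

lemma integral_id_map_signedCoords (hμ₀ : μ[id] = 0) : (μ.map signedCoords)[id] = 0 := by
  simp only [id_eq] at hμ₀ ⊢
  rw [ContinuousLinearMap.integral_id_map (μ := μ) IsGaussian.integrable_id signedCoords, hμ₀,
    map_zero]

theorem integral_max_norm_le [Nonempty ι] (hμ₀ : μ[id] = 0) (hν₀ : ν[id] = 0)
    (h : ∀ i j, 2 * |∫ x, x i * x j ∂μ - ∫ x, x i * x j ∂ν|
      ≤ ∫ x, x i * x i ∂ν - ∫ x, x i * x i ∂μ + (∫ x, x j * x j ∂ν - ∫ x, x j * x j ∂μ))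
    (a : ℝ) : ∫ x, max a ‖x‖ ∂μ ≤ ∫ x, max a ‖x‖ ∂ν := by
  have hsq (p q : ι × SignType) : Continuous fun y : ι × SignType → ℝ ↦ (y p - y q) ^ 2 := by
    fun_prop
  set c : ι × SignType → ℝ := fun p ↦ if p.2 = 0 then a else 0
  have hsup : Continuous fun y ↦ ⨆ p, (c + y) p :=
    lipschitzWith_iSup.continuous.comp (continuous_const_add c)
  have hmap (ρ : Measure (ι → ℝ)) {f : (ι × SignType → ℝ) → ℝ} (hf : Continuous f) :
      ∫ y, f y ∂(ρ.map signedCoords) = ∫ x, f (signedCoords x) ∂ρ :=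
    integral_map signedCoords.continuous.aemeasurable hf.aestronglyMeasurable
  have key := integral_iSup_add_le_of_integral_sub_sq_le (integral_id_map_signedCoords hμ₀)
    (integral_id_map_signedCoords hν₀)
    (fun p q ↦ by simpa only [hmap _ (hsq p q)] using integral_signedCoords_sub_sq_le h p q) c
  simpa only [hmap _ hsup, c, iSup_add_signedCoords_eq_max_norm] using key

end SignedCoordinates

section StopLoss

lemma integral_rpow_mul_sub {m u : ℝ} (hm : 1 < m) (hu : 0 ≤ u) :
    ∫ a in 0..u, a ^ (m - 2) * (u - a) = u ^ m / (m * (m - 1)) := by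
  have hm₁ : m - 1 ≠ 0 := by linarith
  have hpow {v : ℝ} (hv : 0 ≤ v) (p : ℝ) (hp : p + 1 ≠ 0) : v ^ p * v = v ^ (p + 1) :=
    (rpow_add_one' hv hp).symm
  calc ∫ a in 0..u, a ^ (m - 2) * (u - a)
      = ∫ a in 0..u, (a ^ (m - 2) * u - a ^ (m - 1)) := by
        refine intervalIntegral.integral_congr fun a ha ↦ ?_
        rw [Set.uIcc_of_le hu] at ha
        simp only [mul_sub, hpow ha.1 (m - 2) (by linarith)]
        ring_nf
    _ = u ^ (m - 1) / (m - 1) * u - u ^ m / m := by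
        rw [intervalIntegral.integral_sub
          ((intervalIntegral.intervalIntegrable_rpow' (by linarith)).mul_const u)
          (intervalIntegral.intervalIntegrable_rpow' (by linarith)),
          intervalIntegral.integral_mul_const, integral_rpow (.inl (by linarith)),
          integral_rpow (.inl (by linarith)), sub_add_cancel, show m - 2 + 1 = m - 1 by ring,
          zero_rpow hm₁, zero_rpow (by linarith), sub_zero, sub_zero]
    _ = u ^ m / (m * (m - 1)) := by
        rw [div_mul_eq_mul_div, hpow hu (m - 1) (by linarith), sub_add_cancel]
        field_simp
        ring

lemma lintegral_Ioi_rpow_mul_ofReal_sub {m u : ℝ} (hm : 1 < m) (hu : 0 ≤ u) :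
    ∫⁻ a in Set.Ioi (0 : ℝ), ENNReal.ofReal (a ^ (m - 2)) * ENNReal.ofReal (u - a)
      = ENNReal.ofReal (u ^ m / (m * (m - 1))) := by
  have hzero : Set.EqOn (fun a ↦ ENNReal.ofReal (a ^ (m - 2)) * ENNReal.ofReal (u - a)) 0
      (Set.Ioi u) := fun a ha ↦ by
    simp [ENNReal.ofReal_of_nonpos (sub_nonpos.2 (Set.mem_Ioi.1 ha).le)]
  have hint : IntervalIntegrable (fun a : ℝ ↦ a ^ (m - 2) * (u - a)) volume 0 u :=
    (intervalIntegral.intervalIntegrable_rpow' (by linarith)).mul_continuousOn (by fun_prop)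
  calc ∫⁻ a in Set.Ioi (0 : ℝ), ENNReal.ofReal (a ^ (m - 2)) * ENNReal.ofReal (u - a)
      = ∫⁻ a in Set.Ioc 0 u, ENNReal.ofReal (a ^ (m - 2) * (u - a)) := by
        rw [← Set.Ioc_union_Ioi_eq_Ioi hu, lintegral_union measurableSet_Ioi
          (Set.Ioc_disjoint_Ioi le_rfl), setLIntegral_eq_zero measurableSet_Ioi hzero, add_zero]
        exact setLIntegral_congr_fun measurableSet_Ioc fun a ha ↦
          (ENNReal.ofReal_mul (rpow_nonneg ha.1.le _)).symm
    _ = ENNReal.ofReal (u ^ m / (m * (m - 1))) := by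
        rw [← integral_rpow_mul_sub hm hu, intervalIntegral.integral_of_le hu,
          ofReal_integral_eq_lintegral_ofReal hint.1]
        refine (ae_restrict_mem measurableSet_Ioc).mono fun a ha ↦ ?_
        exact mul_nonneg (rpow_nonneg ha.1.le _) (sub_nonneg.2 ha.2)

variable {Ω Ω' : Type*} [MeasurableSpace Ω] [MeasurableSpace Ω'] {P : Measure Ω}
  {P' : Measure Ω'} {U : Ω → ℝ} {V : Ω' → ℝ} {m : ℝ}

lemma lintegral_ofReal_sub [IsProbabilityMeasure P] (hU : Integrable U P) (a : ℝ) :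
    ∫⁻ ω, ENNReal.ofReal (U ω - a) ∂P = ENNReal.ofReal (∫ ω, max a (U ω) ∂P - a) := by
  have hmax : Integrable (fun ω ↦ max a (U ω)) P := (integrable_const a).sup hU
  calc ∫⁻ ω, ENNReal.ofReal (U ω - a) ∂P
      = ∫⁻ ω, ENNReal.ofReal (max a (U ω) - a) ∂P := by
        simp only [← max_sub_sub_right, sub_self, ENNReal.ofReal_max, ENNReal.ofReal_zero,
          zero_le, sup_of_le_right]
    _ = ENNReal.ofReal (∫ ω, (max a (U ω) - a) ∂P) :=
        (ofReal_integral_eq_lintegral_ofReal (hmax.sub (integrable_const a))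
          (.of_forall fun ω ↦ sub_nonneg.2 (le_max_left a (U ω)))).symm
    _ = ENNReal.ofReal (∫ ω, max a (U ω) ∂P - a) := by
        rw [integral_sub hmax (integrable_const a), integral_const, probReal_univ, one_smul]

variable [SFinite P] [SFinite P']

lemma lintegral_rpow_eq_lintegral_lintegral_sub (hU : AEMeasurable U P) (hU₀ : ∀ ω, 0 ≤ U ω)
    (hm : 1 < m) :
    ∫⁻ ω, ENNReal.ofReal (U ω ^ m) ∂P = ENNReal.ofReal (m * (m - 1)) *
      ∫⁻ a in Set.Ioi 0, ENNReal.ofReal (a ^ (m - 2)) * ∫⁻ ω, ENNReal.ofReal (U ω - a) ∂P := by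
  have hm₀ : 0 < m * (m - 1) := mul_pos (by linarith) (by linarith)
  have hmeas : AEMeasurable (Function.uncurry fun (a : ℝ) ω ↦
      ENNReal.ofReal (a ^ (m - 2)) * ENNReal.ofReal (U ω - a))
      ((volume.restrict (Set.Ioi 0)).prod P) := by
    have := hU.comp_snd (μ := volume.restrict (Set.Ioi (0 : ℝ)))
    fun_prop
  calc ∫⁻ ω, ENNReal.ofReal (U ω ^ m) ∂P
      = ENNReal.ofReal (m * (m - 1)) * ∫⁻ ω, ENNReal.ofReal (U ω ^ m / (m * (m - 1))) ∂P := by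
        rw [← lintegral_const_mul' _ _ ENNReal.ofReal_ne_top]
        congr with ω
        rw [← ENNReal.ofReal_mul hm₀.le, mul_div_cancel₀ _ hm₀.ne']
    _ = ENNReal.ofReal (m * (m - 1)) * ∫⁻ ω, ∫⁻ a in Set.Ioi (0 : ℝ),
          ENNReal.ofReal (a ^ (m - 2)) * ENNReal.ofReal (U ω - a) ∂volume ∂P := by
        simp only [lintegral_Ioi_rpow_mul_ofReal_sub hm (hU₀ _)]
    _ = _ := by
        rw [← lintegral_lintegral_swap hmeas]
        simp only [lintegral_const_mul' _ _ ENNReal.ofReal_ne_top]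

theorem lintegral_rpow_le_of_lintegral_sub_le (hU : AEMeasurable U P) (hU₀ : ∀ ω, 0 ≤ U ω)
    (hV : AEMeasurable V P') (hV₀ : ∀ ω, 0 ≤ V ω)
    (h : ∀ a, 0 ≤ a → ∫⁻ ω, ENNReal.ofReal (U ω - a) ∂P ≤ ∫⁻ ω, ENNReal.ofReal (V ω - a) ∂P')
    (hm : 1 ≤ m) :
    ∫⁻ ω, ENNReal.ofReal (U ω ^ m) ∂P ≤ ∫⁻ ω, ENNReal.ofReal (V ω ^ m) ∂P' := by
  obtain rfl | hm := hm.eq_or_lt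
  · simpa using h 0 le_rfl
  rw [lintegral_rpow_eq_lintegral_lintegral_sub hU hU₀ hm,
    lintegral_rpow_eq_lintegral_lintegral_sub hV hV₀ hm]
  gcongr _ * ?_
  refine setLIntegral_mono' measurableSet_Ioi fun a ha ↦ ?_
  gcongr
  exact h a (Set.mem_Ioi.1 ha).le

end StopLoss

section MomentComparison

lemma integrable_norm_rpow {E : Type*} [NormedAddCommGroup E] [NormedSpace ℝ E] [CompleteSpace E]
    [SecondCountableTopology E] [MeasurableSpace E] [BorelSpace E] (μ : Measure E) [IsGaussian μ]
    {m : ℝ} (hm : 0 ≤ m) :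
    Integrable (fun x ↦ ‖x‖ ^ m) μ := by
  lift m to ℝ≥0 using hm
  exact (IsGaussian.memLp_id μ m ENNReal.coe_ne_top).integrable_norm_rpow'

variable {ι : Type*} [Fintype ι] {μ ν : Measure (ι → ℝ)} [IsGaussian μ] [IsGaussian ν]

theorem integral_norm_rpow_le (hμ₀ : μ[id] = 0) (hν₀ : ν[id] = 0)
    (h : ∀ i j, 2 * |∫ x, x i * x j ∂μ - ∫ x, x i * x j ∂ν|
      ≤ ∫ x, x i * x i ∂ν - ∫ x, x i * x i ∂μ + (∫ x, x j * x j ∂ν - ∫ x, x j * x j ∂μ))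
    {m : ℝ} (hm : 1 ≤ m) : ∫ x, ‖x‖ ^ m ∂μ ≤ ∫ x, ‖x‖ ^ m ∂ν := by
  cases isEmpty_or_nonempty ι
  · simp [norm_of_subsingleton]
  have hpow (x : ι → ℝ) : 0 ≤ ‖x‖ ^ m := rpow_nonneg (norm_nonneg x) m
  have hm₀ : 0 ≤ m := by linarith
  refine (ENNReal.ofReal_le_ofReal_iff (integral_nonneg hpow)).1 ?_
  rw [ofReal_integral_eq_lintegral_ofReal (integrable_norm_rpow μ hm₀) (.of_forall hpow),
    ofReal_integral_eq_lintegral_ofReal (integrable_norm_rpow ν hm₀) (.of_forall hpow)]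
  refine lintegral_rpow_le_of_lintegral_sub_le (by fun_prop) norm_nonneg (by fun_prop)
    norm_nonneg (fun a _ ↦ ?_) hm
  have hnorm (ρ : Measure (ι → ℝ)) [IsGaussian ρ] : Integrable (‖·‖) ρ :=
    IsGaussian.integrable_id.norm
  rw [lintegral_ofReal_sub (hnorm μ), lintegral_ofReal_sub (hnorm ν)]
  exact ENNReal.ofReal_le_ofReal (sub_le_sub_right (integral_max_norm_le hμ₀ hν₀ h a) a)

lemma iSup_abs_eq_norm (x : ι → ℝ) : ⨆ i, |x i| = ‖x‖ :=
  le_antisymm (Real.iSup_le (norm_le_pi_norm x) (norm_nonneg x))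
    ((pi_norm_le_iff_of_nonneg (Real.iSup_nonneg fun i ↦ abs_nonneg (x i))).2
      (le_ciSup (Set.finite_range fun i ↦ |x i|).bddAbove))

theorem moment_comparison_max_abs_general {Ω Ω' : Type*} [MeasurableSpace Ω] [MeasurableSpace Ω']
    {P : Measure Ω} {P' : Measure Ω'} {X : Ω → ι → ℝ} {Y : Ω' → ι → ℝ}
    (hX : HasGaussianLaw X P) (hY : HasGaussianLaw Y P') (hX₀ : P[X] = 0) (hY₀ : P'[Y] = 0)
    (hcond : ∀ i j, 2 * |∫ ω, X ω i * X ω j ∂P - ∫ ω, Y ω i * Y ω j ∂P'|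
      ≤ ∫ ω, Y ω i * Y ω i ∂P' - ∫ ω, X ω i * X ω i ∂P
        + (∫ ω, Y ω j * Y ω j ∂P' - ∫ ω, X ω j * X ω j ∂P))
    {m : ℝ} (hm : 1 ≤ m) :
    ∫ ω, (⨆ i, |X ω i|) ^ m ∂P ≤ ∫ ω, (⨆ i, |Y ω i|) ^ m ∂P' := by
  have := hX.isGaussian_map
  have := hY.isGaussian_map
  have hmapX {f : (ι → ℝ) → ℝ} (hf : Measurable f) : ∫ ω, f (X ω) ∂P = ∫ x, f x ∂(P.map X) :=
    (integral_map hX.aemeasurable hf.aestronglyMeasurable).symm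
  have hmapY {f : (ι → ℝ) → ℝ} (hf : Measurable f) : ∫ ω, f (Y ω) ∂P' = ∫ x, f x ∂(P'.map Y) :=
    (integral_map hY.aemeasurable hf.aestronglyMeasurable).symm
  have hmul (i j : ι) : Measurable fun x : ι → ℝ ↦ x i * x j := by fun_prop
  have hnorm : Measurable fun x : ι → ℝ ↦ ‖x‖ ^ m := by fun_prop
  simp only [iSup_abs_eq_norm, hmapX hnorm, hmapY hnorm]
  refine integral_norm_rpow_le ?_ ?_ (fun i j ↦ ?_) hm
  · exact (integral_map hX.aemeasurable aestronglyMeasurable_id).trans hX₀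
  · exact (integral_map hY.aemeasurable aestronglyMeasurable_id).trans hY₀
  · simpa only [hmapX (hmul _ _), hmapY (hmul _ _)] using hcond i j

end MomentComparison

namespace IsCenteredGaussianVec

variable {Ω : Type*} [MeasurableSpace Ω] {k : ℕ} {P : Measure Ω} {X : Ω → Fin k → ℝ}

lemma map_eval (hX : IsCenteredGaussianVec P X) (i : Fin k) :
    P.map (fun ω ↦ X ω i) = gaussianReal 0 (variance (fun ω ↦ X ω i) P).toNNReal := by
  simpa [Pi.single_apply] using hX (Pi.single i 1)

lemma aemeasurable (hX : IsCenteredGaussianVec P X) : AEMeasurable X P :=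
  aemeasurable_pi_iff.2 fun i ↦ AEMeasurable.of_map_ne_zero <| by
    rw [hX.map_eval i]
    exact IsProbabilityMeasure.ne_zero _

lemma hasGaussianLaw (hX : IsCenteredGaussianVec P X) : HasGaussianLaw X P where
  isGaussian_map := isGaussian_of_map_eq_gaussianReal fun L ↦ by
    have hL : L ∘ X = fun ω ↦ ∑ i, L (Pi.single i 1) * X ω i := by
      ext ω
      conv_lhs => rw [Function.comp_apply, pi_eq_sum_univ' (X ω)]
      simp [mul_comm]
    rw [AEMeasurable.map_map_of_aemeasurable (by fun_prop) hX.aemeasurable, hL]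
    exact ⟨0, _, hX fun i ↦ L (Pi.single i 1)⟩

lemma integral_eq_zero (hX : IsCenteredGaussianVec P X) : P[X] = 0 := by
  ext i
  have hXi := aemeasurable_pi_iff.1 hX.aemeasurable i
  rw [eval_integral hX.hasGaussianLaw.integrable.eval]
  calc ∫ ω, X ω i ∂P = ∫ y, y ∂(P.map fun ω ↦ X ω i) :=
        (integral_map hXi aestronglyMeasurable_id).symm
    _ = 0 := by rw [hX.map_eval i, integral_id_gaussianReal]

end IsCenteredGaussianVec

/-- **Theorem (moment comparison for suprema of Gaussian vectors).**
If `X ~ N(0, SX)` and `Y ~ N(0, SY)` are centered Gaussian vectors in `ℝ^k` with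
`2 |SX i j - SY i j| ≤ (SY i i - SX i i) + (SY j j - SX j j)` for all `i j`, then for
every `m ≥ 1`, `E[(max_i |X_i|)^m] ≤ E[(max_i |Y_i|)^m]`. -/
theorem moment_comparison_max_abs
    {Ω : Type*} [MeasurableSpace Ω] {k : ℕ} (P : Measure Ω) [IsProbabilityMeasure P]
    (X Y : Ω → Fin k → ℝ) (hXmeas : Measurable X) (hYmeas : Measurable Y)
    (hX : IsCenteredGaussianVec P X) (hY : IsCenteredGaussianVec P Y)
    (SX SY : Fin k → Fin k → ℝ)
    (hSX : ∀ i j, SX i j = ∫ ω, X ω i * X ω j ∂P)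
    (hSY : ∀ i j, SY i j = ∫ ω, Y ω i * Y ω j ∂P)
    (hcond : ∀ i j, 2 * |SX i j - SY i j| ≤ SY i i - SX i i + (SY j j - SX j j))
    (m : ℝ) (hm : 1 ≤ m) :
    ∫ ω, (⨆ i, |X ω i|) ^ m ∂P ≤ ∫ ω, (⨆ i, |Y ω i|) ^ m ∂P := by
  simp only [hSX, hSY] at hcond
  exact moment_comparison_max_abs_general hX.hasGaussianLaw hY.hasGaussianLaw
    hX.integral_eq_zero hY.integral_eq_zero hcond hm
end

section
/- Let g ~ N(0, I_n) be a standard Gaussian vector in R^n, and let X_1 = M_1 g, Y_1 = M_2 g for deterministic nonzero row vectors M_1, M_2 ∈ R^{1×n} such that |Corr(X_1, Y_1)| < 1. Then for every m > 0 there exists a constant C(m) > 0 (depending only on m) such that for all real p > 1: E[(max(|X_1|, |Y_1|))^{m−2} · (min(|X_1|, |Y_1|)/max(|X_1|, |Y_1|))^{p−1}] ≤ C(m, X_1, Y_1)/p, where C(m, X_1, Y_1) = C(m) · (max(Var(X_1), Var(Y_1)))^{m/2} / sqrt(Var(X_1) · Var(Y_1) · (1 − Corr(X_1, Y_1)^2)).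 -/
open MeasureTheory ProbabilityTheory Real
open scoped NNReal BigOperators

/-- The covariance `Cov(f, g) = E[f g] - E[f] E[g]` of two real random variables. -/
noncomputable def covar {Ω : Type*} [MeasurableSpace Ω] (P : Measure Ω)
    (f g : Ω → ℝ) : ℝ :=
  (∫ ω, f ω * g ω ∂P) - (∫ ω, f ω ∂P) * ∫ ω, g ω ∂P

/-- The Pearson correlation `Corr(f, g) = Cov(f, g) / sqrt(Var f · Var g)`. -/
noncomputable def corr {Ω : Type*} [MeasurableSpace Ω] (P : Measure Ω)
    (f g : Ω → ℝ) : ℝ :=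
  covar P f g / Real.sqrt (variance f P * variance g P)

/-- The law of a standard Gaussian vector `g ~ N(0, I_n)` in `ℝ^n`. -/
noncomputable def stdGaussianPi (n : ℕ) : Measure (Fin n → ℝ) :=
  Measure.pi fun _ => gaussianReal 0 1

/-- The linear form `x ↦ M x = ∑ i, M i * x i` given by a row vector `M ∈ ℝ^{1×n}`. -/
def linForm {n : ℕ} (M : Fin n → ℝ) : (Fin n → ℝ) → ℝ :=
  fun x => ∑ i, M i * x i

/-! By symmetry it suffices to bound the expectation over `|Y| ≤ |X|`. Writing `Y = c X + Z` with
`Z` independent of `X` and of variance `s`, the conditional density of `Y` given `X` is at most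
`1 / √(2 π s)`. Integrating `|y| ^ (p - 1)` over `|y| ≤ |X|` gives `2 |X| ^ p / p`, which produces
the factor `1 / p` and leaves the absolute moment `E |X| ^ (m - 1)`, a Gamma value times
`(Var X) ^ ((m - 1) / 2)`. The dependence on the correlation comes from
`Var X * s = Var X * Var Y * (1 - Corr(X, Y) ^ 2)`.
-/

section LebesgueAndGaussianOnReal

lemma lintegral_comp_abs (f : ℝ → ENNReal) :
    ∫⁻ x, f |x| = 2 * ∫⁻ x in Set.Ioi 0, f x := by
  have hpos : ∫⁻ x in Set.Ioi 0, f |x| = ∫⁻ x in Set.Ioi 0, f x :=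
    setLIntegral_congr_fun measurableSet_Ioi fun x hx => by rw [abs_of_pos hx]
  have hneg : ∫⁻ x in Set.Iio 0, f |x| = ∫⁻ x in Set.Ioi 0, f |x| := by
    have h := (Measure.measurePreserving_neg (volume : Measure ℝ)).setLIntegral_comp_preimage_emb
      (Homeomorph.neg ℝ).measurableEmbedding (fun x => f |x|) (Set.Ioi 0)
    simpa only [abs_neg, Set.neg_preimage, Set.neg_Ioi, neg_zero] using h
  rw [← lintegral_add_compl (fun x => f |x|) measurableSet_Ioi, Set.compl_Ioi,
    setLIntegral_congr Iio_ae_eq_Iic.symm, hneg, hpos, two_mul]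

lemma setLIntegral_Icc_abs_rpow {p r : ℝ} (hp : 0 < p) (hr : 0 ≤ r) :
    ∫⁻ y in Set.Icc (-r) r, ENNReal.ofReal (|y| ^ (p - 1)) = ENNReal.ofReal (2 / p * r ^ p) := by
  have hint : IntegrableOn (fun y : ℝ => y ^ (p - 1)) (Set.Ioc 0 r) :=
    (intervalIntegrable_iff_integrableOn_Ioc_of_le hr).1
      (intervalIntegral.intervalIntegrable_rpow' (by linarith))
  have hindicator : ∀ y : ℝ, (Set.Icc (-r) r).indicator
      (fun y => ENNReal.ofReal (|y| ^ (p - 1))) y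
        = (Set.Iic r).indicator (fun t => ENNReal.ofReal (t ^ (p - 1))) |y| := fun y => by
    simp only [Set.indicator, Set.mem_Iic, Set.mem_Icc, abs_le]
  calc ∫⁻ y in Set.Icc (-r) r, ENNReal.ofReal (|y| ^ (p - 1))
      = 2 * ∫⁻ y in Set.Ioc 0 r, ENNReal.ofReal (y ^ (p - 1)) := by
        rw [← lintegral_indicator measurableSet_Icc, lintegral_congr hindicator,
          lintegral_comp_abs, setLIntegral_indicator measurableSet_Iic, Set.inter_comm,
          Set.Ioi_inter_Iic]
    _ = 2 * ENNReal.ofReal (r ^ p / p) := by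
        rw [← ofReal_integral_eq_lintegral_ofReal hint
            ((ae_restrict_mem measurableSet_Ioc).mono fun y hy => rpow_nonneg hy.1.le _),
          ← intervalIntegral.integral_of_le hr, integral_rpow (Or.inl (by linarith)),
          sub_add_cancel, zero_rpow hp.ne', sub_zero]
    _ = ENNReal.ofReal (2 / p * r ^ p) := by
        rw [← ENNReal.ofReal_ofNat 2, ← ENNReal.ofReal_mul zero_le_two]
        ring_nf

lemma gaussianReal_le_smul_volume (μ : ℝ) {v : ℝ≥0} (hv : v ≠ 0) :
    gaussianReal μ v ≤ ENNReal.ofReal (√(2 * π * v))⁻¹ • volume := by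
  rw [gaussianReal_of_var_ne_zero _ hv, ← withDensity_const]
  refine withDensity_mono (.of_forall fun x => ENNReal.ofReal_le_ofReal ?_)
  refine mul_le_of_le_one_right (by positivity) (exp_le_one_iff.2 ?_)
  exact div_nonpos_of_nonpos_of_nonneg (neg_nonpos.2 (sq_nonneg _)) (by positivity)

lemma lintegral_abs_rpow_gaussianReal {q : ℝ} (hq : -1 < q) {v : ℝ≥0} (hv : v ≠ 0) :
    ∫⁻ x, ENNReal.ofReal (|x| ^ q) ∂gaussianReal 0 v
      = ENNReal.ofReal ((2 * v) ^ (q / 2) * Gamma ((q + 1) / 2) / √π) := by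
  have hv' : (0 : ℝ) < 2 * v := by positivity
  have hint := (integrableOn_rpow_mul_exp_neg_mul_rpow hq two_pos (inv_pos.2 hv')).const_mul
    (√(2 * π * v))⁻¹
  calc ∫⁻ x, ENNReal.ofReal (|x| ^ q) ∂gaussianReal 0 v
      = ∫⁻ x, ENNReal.ofReal
          ((√(2 * π * v))⁻¹ * (|x| ^ q * exp (-(2 * v : ℝ)⁻¹ * |x| ^ (2 : ℝ)))) := by
        rw [gaussianReal_of_var_ne_zero _ hv, lintegral_withDensity_eq_lintegral_mul _
          (measurable_gaussianPDF 0 v) (by fun_prop)]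
        refine lintegral_congr fun x => ?_
        rw [Pi.mul_apply, gaussianPDF, gaussianPDFReal, ← ENNReal.ofReal_mul (by positivity),
          rpow_two, sq_abs, sub_zero, neg_div, div_eq_inv_mul, neg_mul, mul_assoc, mul_comm (exp _)]
    _ = 2 * ENNReal.ofReal ((√(2 * π * v))⁻¹ *
          ((2 * v : ℝ)⁻¹ ^ (-(q + 1) / 2) * (1 / 2) * Gamma ((q + 1) / 2))) := by
        rw [lintegral_comp_abs fun x => ENNReal.ofReal
            ((√(2 * π * v))⁻¹ * (x ^ q * exp (-(2 * v : ℝ)⁻¹ * x ^ (2 : ℝ)))),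
          ← ofReal_integral_eq_lintegral_ofReal hint
            ((ae_restrict_mem measurableSet_Ioi).mono fun x (hx : 0 < x) => by positivity),
          integral_const_mul, integral_rpow_mul_exp_neg_mul_rpow two_pos hq (inv_pos.2 hv')]
    _ = ENNReal.ofReal ((2 * v) ^ (q / 2) * Gamma ((q + 1) / 2) / √π) := by
        rw [← ENNReal.ofReal_ofNat 2, ← ENNReal.ofReal_mul zero_le_two, inv_rpow hv'.le,
          ← rpow_neg hv'.le, show -(-(q + 1) / 2) = q / 2 + 1 / 2 by ring, rpow_add hv',
          ← sqrt_eq_rpow, mul_right_comm 2 π (v : ℝ), sqrt_mul hv'.le]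
        congr 1
        field_simp

end LebesgueAndGaussianOnReal

section RatioPow

/-- The weight `max(|x|, |y|) ^ (m - 2) * (min(|x|, |y|) / max(|x|, |y|)) ^ (p - 1)` on the plane
whose Gaussian expectation is to be bounded. -/
noncomputable def ratioPow (m p : ℝ) (q : ℝ × ℝ) : ℝ :=
  (max |q.1| |q.2|) ^ (m - 2) * (min |q.1| |q.2| / max |q.1| |q.2|) ^ (p - 1)

variable {m p : ℝ}

lemma ratioPow_nonneg (q : ℝ × ℝ) : 0 ≤ ratioPow m p q := by
  unfold ratioPow
  positivity

@[fun_prop]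
lemma measurable_ratioPow : Measurable (ratioPow m p) := by
  unfold ratioPow
  fun_prop

lemma ratioPow_swap (q : ℝ × ℝ) : ratioPow m p q.swap = ratioPow m p q := by
  simp only [ratioPow, Prod.fst_swap, Prod.snd_swap, max_comm, min_comm]

lemma ratioPow_of_abs_le {x y : ℝ} (hx : x ≠ 0) (hyx : |y| ≤ |x|) :
    ratioPow m p (x, y) = |x| ^ (m - 1 - p) * |y| ^ (p - 1) := by
  rw [ratioPow, max_eq_left hyx, min_eq_right hyx, div_rpow (abs_nonneg y) (abs_nonneg x),
    show m - 1 - p = (m - 2) - (p - 1) by ring, rpow_sub (abs_pos.2 hx) (m - 2), mul_div_assoc',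
    mul_div_right_comm]

lemma setLIntegral_Icc_ratioPow_le (hp : 0 < p) (x : ℝ) :
    ∫⁻ y in Set.Icc (-|x|) |x|, ENNReal.ofReal (ratioPow m p (x, y))
      ≤ ENNReal.ofReal (2 / p) * ENNReal.ofReal (|x| ^ (m - 1)) := by
  rcases eq_or_ne x 0 with rfl | hx
  · simp
  apply le_of_eq
  calc ∫⁻ y in Set.Icc (-|x|) |x|, ENNReal.ofReal (ratioPow m p (x, y))
      = ∫⁻ y in Set.Icc (-|x|) |x|,
          ENNReal.ofReal (|x| ^ (m - 1 - p)) * ENNReal.ofReal (|y| ^ (p - 1)) :=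
        setLIntegral_congr_fun measurableSet_Icc fun y hy => by
          rw [ratioPow_of_abs_le hx (abs_le.2 hy), ENNReal.ofReal_mul (by positivity)]
    _ = ENNReal.ofReal (|x| ^ (m - 1 - p)) * ENNReal.ofReal (2 / p * |x| ^ p) := by
        rw [lintegral_const_mul' _ _ ENNReal.ofReal_ne_top,
          setLIntegral_Icc_abs_rpow hp (abs_nonneg x)]
    _ = ENNReal.ofReal (2 / p) * ENNReal.ofReal (|x| ^ (m - 1)) := by
        rw [← ENNReal.ofReal_mul (by positivity), ← ENNReal.ofReal_mul (by positivity),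
          mul_left_comm, ← rpow_add (abs_pos.2 hx), sub_add_cancel]

lemma setLIntegral_ratioPow_prod_volume_le (hp : 0 < p) (μ : Measure ℝ) [SFinite μ] :
    ∫⁻ q in {q | |q.2| ≤ |q.1|}, ENNReal.ofReal (ratioPow m p q) ∂μ.prod volume
      ≤ ENNReal.ofReal (2 / p) * ∫⁻ x, ENNReal.ofReal (|x| ^ (m - 1)) ∂μ := by
  have hcone : MeasurableSet {q : ℝ × ℝ | |q.2| ≤ |q.1|} :=
    measurableSet_le (by fun_prop) (by fun_prop)
  rw [← lintegral_indicator hcone,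
    lintegral_prod _ (Measurable.indicator (by fun_prop) hcone).aemeasurable,
    ← lintegral_const_mul' _ _ ENNReal.ofReal_ne_top]
  refine lintegral_mono fun x => ?_
  have hsection : ∀ y, {q : ℝ × ℝ | |q.2| ≤ |q.1|}.indicator
      (fun q => ENNReal.ofReal (ratioPow m p q)) (x, y)
        = (Set.Icc (-|x|) |x|).indicator
            (fun y => ENNReal.ofReal (ratioPow m p (x, y))) y := fun y => by
    simp only [Set.indicator, Set.mem_ofPred_eq, Set.mem_Icc, abs_le]
  rw [lintegral_congr hsection, lintegral_indicator measurableSet_Icc]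
  exact setLIntegral_Icc_ratioPow_le hp x

lemma lintegral_ratioPow_le_add_swap (μ : Measure (ℝ × ℝ)) :
    ∫⁻ q, ENNReal.ofReal (ratioPow m p q) ∂μ
      ≤ (∫⁻ q in {q | |q.2| ≤ |q.1|}, ENNReal.ofReal (ratioPow m p q) ∂μ)
        + ∫⁻ q in {q | |q.2| ≤ |q.1|}, ENNReal.ofReal (ratioPow m p q) ∂μ.map Prod.swap := by
  have hcone : MeasurableSet {q : ℝ × ℝ | |q.2| ≤ |q.1|} :=
    measurableSet_le (by fun_prop) (by fun_prop)
  rw [setLIntegral_map hcone (by fun_prop) measurable_swap]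
  simp only [ratioPow_swap]
  rw [← setLIntegral_univ]
  exact (lintegral_mono_set fun q _ => le_total |q.2| |q.1|).trans (lintegral_union_le _ _ _)

end RatioPow

section Regression

variable {Ω : Type*} [MeasurableSpace Ω] {P : Measure Ω} {X Y : Ω → ℝ}

/-- The residual `Y - (Cov(X, Y) / Var X) X` of the linear regression of `Y` on `X`: the part of `Y`
uncorrelated with `X`, up to the mean, which is not subtracted. -/
noncomputable def regressionResidual (P : Measure Ω) (X Y : Ω → ℝ) : Ω → ℝ :=
  fun ω => Y ω - cov[X, Y; P] / Var[X; P] * X ω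

lemma covar_eq_covariance [IsProbabilityMeasure P] (hX : MemLp X 2 P) (hY : MemLp Y 2 P) :
    covar P X Y = cov[X, Y; P] :=
  (covariance_eq_sub hX hY).symm

lemma corr_comm (P : Measure Ω) (X Y : Ω → ℝ) : corr P X Y = corr P Y X := by
  simp only [corr, covar, mul_comm]

lemma covariance_regressionResidual [IsProbabilityMeasure P] (hX : MemLp X 2 P)
    (hY : MemLp Y 2 P) (hVX : Var[X; P] ≠ 0) : cov[X, regressionResidual P X Y; P] = 0 := by
  unfold regressionResidual
  rw [covariance_fun_sub_right hX hY (hX.const_mul _), covariance_const_mul_right,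
    covariance_self hX.aemeasurable, div_mul_cancel₀ _ hVX, sub_self]

lemma variance_regressionResidual [IsProbabilityMeasure P] (hX : MemLp X 2 P) (hY : MemLp Y 2 P)
    (hVX : Var[X; P] ≠ 0) :
    Var[regressionResidual P X Y; P] = Var[Y; P] - cov[X, Y; P] ^ 2 / Var[X; P] := by
  unfold regressionResidual
  rw [variance_fun_sub hY (hX.const_mul _), variance_const_mul, covariance_const_mul_right,
    covariance_comm Y X]
  field_simp
  ring

lemma variance_mul_variance_regressionResidual [IsProbabilityMeasure P] (hX : MemLp X 2 P)
    (hY : MemLp Y 2 P) (hVX : Var[X; P] ≠ 0) (hVY : Var[Y; P] ≠ 0) :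
    Var[X; P] * Var[regressionResidual P X Y; P]
      = Var[X; P] * Var[Y; P] * (1 - corr P X Y ^ 2) := by
  rw [variance_regressionResidual hX hY hVX, corr, covar_eq_covariance hX hY, div_pow,
    sq_sqrt (mul_nonneg (variance_nonneg X P) (variance_nonneg Y P))]
  field_simp

lemma hasGaussianLaw_prodMk_regressionResidual
    (hXY : HasGaussianLaw (fun ω => (X ω, Y ω)) P) :
    HasGaussianLaw (fun ω => (X ω, regressionResidual P X Y ω)) P := by
  simpa [regressionResidual] using hXY.map_fun ((ContinuousLinearMap.fst ℝ ℝ ℝ).prod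
    (ContinuousLinearMap.snd ℝ ℝ ℝ
      - (cov[X, Y; P] / Var[X; P]) • ContinuousLinearMap.fst ℝ ℝ ℝ))

lemma measurePreserving_shear_prod_volume (μ : Measure ℝ) [SFinite μ] (c : ℝ) :
    MeasurePreserving (fun q : ℝ × ℝ => (q.1, c * q.1 + q.2))
      (μ.prod volume) (μ.prod volume) :=
  (MeasurePreserving.id μ).skew_product (g := fun x z => c * x + z) (by fun_prop)
    (.of_forall fun x => map_add_left_eq_self volume (c * x))

-- The shear `(x, z) ↦ (x, c x + z)` sends the law of `X` and the residual to that of `X` and `Y`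
-- and preserves the product with Lebesgue measure, so no conditional densities are needed.
lemma map_prodMk_le_smul_prod_volume (hXY : HasGaussianLaw (fun ω => (X ω, Y ω)) P)
    (hVX : Var[X; P] ≠ 0) (hVZ : Var[regressionResidual P X Y; P] ≠ 0) :
    P.map (fun ω => (X ω, Y ω))
      ≤ ENNReal.ofReal (√(2 * π * Var[regressionResidual P X Y; P]))⁻¹ •
          (gaussianReal P[X] Var[X; P].toNNReal).prod volume := by
  have := hXY.isProbabilityMeasure
  set Z := regressionResidual P X Y
  set c := cov[X, Y; P] / Var[X; P] with hc
  set K := ENNReal.ofReal (√(2 * π * Var[Z; P]))⁻¹ with hK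
  have hXZ : HasGaussianLaw (fun ω => (X ω, Z ω)) P := hasGaussianLaw_prodMk_regressionResidual hXY
  have hindep : IndepFun X Z P := hXZ.indepFun_of_covariance_eq_zero
    (covariance_regressionResidual hXY.fst.memLp_two hXY.snd.memLp_two hVX)
  have hmapXZ : P.map (fun ω => (X ω, Z ω))
      ≤ K • (gaussianReal P[X] Var[X; P].toNNReal).prod volume := by
    have hZ := gaussianReal_le_smul_volume P[Z] (v := Var[Z; P].toNNReal)
      (toNNReal_pos.2 ((variance_nonneg Z P).lt_of_ne' hVZ)).ne'
    rw [coe_toNNReal _ (variance_nonneg Z P), ← hK] at hZ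
    rw [(indepFun_iff_map_prod_eq_prod_map_map hXZ.fst.aemeasurable hXZ.snd.aemeasurable).1 hindep,
      hXZ.fst.map_eq_gaussianReal, hXZ.snd.map_eq_gaussianReal, ← Measure.prod_smul_right]
    exact Measure.prod_mono le_rfl hZ
  have hshear := measurePreserving_shear_prod_volume (gaussianReal P[X] Var[X; P].toNNReal) c
  calc P.map (fun ω => (X ω, Y ω))
      = (P.map fun ω => (X ω, Z ω)).map fun q => (q.1, c * q.1 + q.2) := by
        rw [AEMeasurable.map_map_of_aemeasurable (by fun_prop) hXZ.aemeasurable]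
        congr 1
        ext ω <;> simp [Z, regressionResidual, hc]
    _ ≤ (K • (gaussianReal P[X] Var[X; P].toNNReal).prod volume).map
          fun q => (q.1, c * q.1 + q.2) := Measure.map_mono hmapXZ hshear.measurable
    _ = K • (gaussianReal P[X] Var[X; P].toNNReal).prod volume := by
        rw [Measure.map_smul, hshear.map_eq]

end Regression

section GaussianPair

variable {Ω : Type*} [MeasurableSpace Ω] {P : Measure Ω} {X Y : Ω → ℝ} {m p : ℝ}

lemma inv_sqrt_mul_rpow_mul_Gamma_eq {a s : ℝ} (ha : 0 < a) (m p : ℝ) :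
    (√(2 * π * s))⁻¹ * (2 / p * ((2 * a) ^ ((m - 1) / 2) * Gamma (m / 2) / √π))
      = 2 ^ (m / 2) * Gamma (m / 2) / π * a ^ (m / 2) / √(a * s) / p := by
  rw [sub_div, rpow_sub (by positivity), ← sqrt_eq_rpow, mul_rpow zero_le_two ha.le,
    sqrt_mul zero_le_two, sqrt_mul (by positivity) s, sqrt_mul zero_le_two, sqrt_mul ha.le]
  have hpi : √π ^ 2 = π := sq_sqrt pi_pos.le
  have h2 : √2 ^ 2 = 2 := sq_sqrt zero_le_two
  field_simp
  rw [hpi, h2]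
  ring

lemma setLIntegral_ratioPow_map_prodMk_le (hXY : HasGaussianLaw (fun ω => (X ω, Y ω)) P)
    (hX : P[X] = 0) (hVX : Var[X; P] ≠ 0) (hVY : Var[Y; P] ≠ 0) (hcorr : |corr P X Y| < 1)
    (hm : 0 < m) (hp : 0 < p) :
    ∫⁻ q in {q | |q.2| ≤ |q.1|}, ENNReal.ofReal (ratioPow m p q) ∂P.map (fun ω => (X ω, Y ω))
      ≤ ENNReal.ofReal (2 ^ (m / 2) * Gamma (m / 2) / π * Var[X; P] ^ (m / 2)
          / √(Var[X; P] * Var[Y; P] * (1 - corr P X Y ^ 2)) / p) := by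
  have := hXY.isProbabilityMeasure
  have hdet := variance_mul_variance_regressionResidual hXY.fst.memLp_two hXY.snd.memLp_two hVX hVY
  have hVX' : 0 < Var[X; P] := (variance_nonneg X P).lt_of_ne' hVX
  have hVZ : Var[regressionResidual P X Y; P] ≠ 0 := by
    refine right_ne_zero_of_mul (a := Var[X; P]) ?_
    rw [hdet]
    exact mul_ne_zero (mul_ne_zero hVX hVY)
      (sub_pos.2 ((sq_lt_one_iff_abs_lt_one _).2 hcorr)).ne'
  have hlaw := map_prodMk_le_smul_prod_volume hXY hVX hVZ
  rw [hX] at hlaw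
  calc ∫⁻ q in {q | |q.2| ≤ |q.1|}, ENNReal.ofReal (ratioPow m p q) ∂P.map (fun ω => (X ω, Y ω))
      ≤ ENNReal.ofReal (√(2 * π * Var[regressionResidual P X Y; P]))⁻¹ *
          ∫⁻ q in {q | |q.2| ≤ |q.1|}, ENNReal.ofReal (ratioPow m p q)
            ∂(gaussianReal 0 Var[X; P].toNNReal).prod volume := by
        rw [← smul_eq_mul, ← lintegral_smul_measure, ← Measure.restrict_smul]
        exact lintegral_mono' (Measure.restrict_mono le_rfl hlaw) le_rfl
    _ ≤ ENNReal.ofReal (√(2 * π * Var[regressionResidual P X Y; P]))⁻¹ *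
          (ENNReal.ofReal (2 / p) *
            ∫⁻ x, ENNReal.ofReal (|x| ^ (m - 1)) ∂gaussianReal 0 Var[X; P].toNNReal) := by
        gcongr
        exact setLIntegral_ratioPow_prod_volume_le hp _
    _ = ENNReal.ofReal (2 ^ (m / 2) * Gamma (m / 2) / π * Var[X; P] ^ (m / 2)
          / √(Var[X; P] * Var[Y; P] * (1 - corr P X Y ^ 2)) / p) := by
        rw [lintegral_abs_rpow_gaussianReal (by linarith) (toNNReal_pos.2 hVX').ne',
          coe_toNNReal _ hVX'.le, sub_add_cancel, ← ENNReal.ofReal_mul (by positivity),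
          ← ENNReal.ofReal_mul (by positivity), inv_sqrt_mul_rpow_mul_Gamma_eq hVX', hdet]

lemma lintegral_ratioPow_le (hXY : HasGaussianLaw (fun ω => (X ω, Y ω)) P)
    (hX : P[X] = 0) (hY : P[Y] = 0) (hVX : Var[X; P] ≠ 0) (hVY : Var[Y; P] ≠ 0)
    (hcorr : |corr P X Y| < 1) (hm : 0 < m) (hp : 0 < p) :
    ∫⁻ ω, ENNReal.ofReal (ratioPow m p (X ω, Y ω)) ∂P
      ≤ ENNReal.ofReal (2 ^ (m / 2 + 1) * Gamma (m / 2) / π * max Var[X; P] Var[Y; P] ^ (m / 2)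
          / √(Var[X; P] * Var[Y; P] * (1 - corr P X Y ^ 2)) / p) := by
  have hYX : HasGaussianLaw (fun ω => (Y ω, X ω)) P := by
    simpa using hXY.map_fun ((ContinuousLinearMap.snd ℝ ℝ ℝ).prod (ContinuousLinearMap.fst ℝ ℝ ℝ))
  have hVX0 := variance_nonneg X P
  have hVY0 := variance_nonneg Y P
  have hXhalf := setLIntegral_ratioPow_map_prodMk_le hXY hX hVX hVY hcorr hm hp
  have hYhalf := setLIntegral_ratioPow_map_prodMk_le hYX hY hVY hVX
    (corr_comm P X Y ▸ hcorr) hm hp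
  rw [mul_comm Var[Y; P], corr_comm P Y X] at hYhalf
  set C := 2 ^ (m / 2) * Gamma (m / 2) / π with hC
  set D := √(Var[X; P] * Var[Y; P] * (1 - corr P X Y ^ 2))
  have hswap : (P.map fun ω => (X ω, Y ω)).map Prod.swap = P.map fun ω => (Y ω, X ω) :=
    AEMeasurable.map_map_of_aemeasurable measurable_swap.aemeasurable hXY.aemeasurable
  calc ∫⁻ ω, ENNReal.ofReal (ratioPow m p (X ω, Y ω)) ∂P
      = ∫⁻ q, ENNReal.ofReal (ratioPow m p q) ∂P.map (fun ω => (X ω, Y ω)) :=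
        (lintegral_map' measurable_ratioPow.ennreal_ofReal.aemeasurable hXY.aemeasurable).symm
    _ ≤ ENNReal.ofReal (C * Var[X; P] ^ (m / 2) / D / p)
          + ENNReal.ofReal (C * Var[Y; P] ^ (m / 2) / D / p) := by
        refine (lintegral_ratioPow_le_add_swap _).trans ?_
        rw [hswap]
        exact add_le_add hXhalf hYhalf
    _ ≤ ENNReal.ofReal (C * max Var[X; P] Var[Y; P] ^ (m / 2) / D / p)
          + ENNReal.ofReal (C * max Var[X; P] Var[Y; P] ^ (m / 2) / D / p) := by
        gcongr
        · exact le_max_left _ _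
        · exact le_max_right _ _
    _ = ENNReal.ofReal (2 ^ (m / 2 + 1) * Gamma (m / 2) / π * max Var[X; P] Var[Y; P] ^ (m / 2)
          / D / p) := by
        rw [← ENNReal.ofReal_add (by positivity) (by positivity), rpow_add_one two_ne_zero, hC]
        ring_nf

theorem integral_bound_ratio_pow_general (hXY : HasGaussianLaw (fun ω => (X ω, Y ω)) P)
    (hX : P[X] = 0) (hY : P[Y] = 0) (hVX : Var[X; P] ≠ 0) (hVY : Var[Y; P] ≠ 0)
    (hcorr : |corr P X Y| < 1) (hm : 0 < m) (hp : 0 < p) :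
    Integrable (fun ω => max |X ω| |Y ω| ^ (m - 2)
        * (min |X ω| |Y ω| / max |X ω| |Y ω|) ^ (p - 1)) P ∧
      ∫ ω, max |X ω| |Y ω| ^ (m - 2) * (min |X ω| |Y ω| / max |X ω| |Y ω|) ^ (p - 1) ∂P
        ≤ 2 ^ (m / 2 + 1) * Gamma (m / 2) / π * max Var[X; P] Var[Y; P] ^ (m / 2)
          / √(Var[X; P] * Var[Y; P] * (1 - corr P X Y ^ 2)) / p := by
  have hbound := lintegral_ratioPow_le hXY hX hY hVX hVY hcorr hm hp
  have hmeas : AEStronglyMeasurable (fun ω => ratioPow m p (X ω, Y ω)) P :=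
    (measurable_ratioPow.comp_aemeasurable hXY.aemeasurable).aestronglyMeasurable
  have hnonneg : 0 ≤ᵐ[P] fun ω => ratioPow m p (X ω, Y ω) := .of_forall fun _ => ratioPow_nonneg _
  have hmax : 0 ≤ max Var[X; P] Var[Y; P] := le_max_of_le_left (variance_nonneg X P)
  refine ⟨⟨hmeas, (hasFiniteIntegral_iff_ofReal hnonneg).2
    (hbound.trans_lt ENNReal.ofReal_lt_top)⟩, ?_⟩
  refine (integral_eq_lintegral_of_nonneg_ae hnonneg hmeas).trans_le ?_
  exact ENNReal.toReal_le_of_le_ofReal (by positivity) hbound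

end GaussianPair

section LinForm

variable {n : ℕ}

lemma hasGaussianLaw_id_stdGaussianPi (n : ℕ) :
    HasGaussianLaw (fun x : Fin n → ℝ => fun i => x i) (stdGaussianPi n) :=
  iIndepFun.hasGaussianLaw (X := fun i (x : Fin n → ℝ) => x i)
    (fun i => (measurePreserving_eval (fun _ => gaussianReal 0 1) i).hasLaw.hasGaussianLaw)
    (iIndepFun_pi (X := fun _ => id) fun _ => aemeasurable_id)

lemma hasGaussianLaw_prodMk_linForm (M N : Fin n → ℝ) :
    HasGaussianLaw (fun x => (linForm M x, linForm N x)) (stdGaussianPi n) := by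
  simpa [linForm, _root_.sum_apply] using (hasGaussianLaw_id_stdGaussianPi n).map_fun
    ((∑ i, M i • ContinuousLinearMap.proj (R := ℝ) (φ := fun _ : Fin n => ℝ) i).prod
      (∑ i, N i • ContinuousLinearMap.proj (R := ℝ) (φ := fun _ : Fin n => ℝ) i))

lemma integral_linForm (M : Fin n → ℝ) : ∫ x, linForm M x ∂stdGaussianPi n = 0 := by
  unfold linForm stdGaussianPi
  rw [integral_finsetSum _ fun i _ => (integrable_eval IsGaussian.integrable_id).const_mul _]
  simp only [integral_const_mul, integral_eval, integral_id_gaussianReal, mul_zero,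
    Finset.sum_const_zero]

lemma variance_linForm (M : Fin n → ℝ) : Var[linForm M; stdGaussianPi n] = ∑ i, M i ^ 2 := by
  have hsum : linForm M = ∑ i, fun x => M i * x i := by
    ext x
    simp only [linForm, Finset.sum_apply]
  rw [hsum, stdGaussianPi,
    variance_sum_pi (X := fun i t => M i * t)
      fun i => IsGaussian.memLp_two_id.const_mul _]
  refine Finset.sum_congr rfl fun i _ => ?_
  rw [variance_const_mul, variance_fun_id_gaussianReal, NNReal.coe_one, mul_one]

lemma variance_linForm_ne_zero {M : Fin n → ℝ} (hM : M ≠ 0) :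
    Var[linForm M; stdGaussianPi n] ≠ 0 := by
  obtain ⟨i, hi⟩ := Function.ne_iff.1 hM
  rw [variance_linForm]
  exact (Finset.sum_pos' (fun i _ => sq_nonneg (M i))
    ⟨i, Finset.mem_univ i, sq_pos_of_ne_zero hi⟩).ne'

end LinForm

/-- **Lemma (first integral bound).** Let `g ~ N(0, I_n)`, `X₁ = M₁ g`, `Y₁ = M₂ g` with
`M₁, M₂ ≠ 0` and `|Corr(X₁, Y₁)| < 1`. For every `m > 0` there is `C(m) > 0` such that
for all `p > 1`,
`E[(max(|X₁|,|Y₁|))^(m-2) (min(|X₁|,|Y₁|)/max(|X₁|,|Y₁|))^(p-1)] ≤ C(m, X₁, Y₁)/p`,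
where `C(m, X₁, Y₁) = C(m) (max(Var X₁, Var Y₁))^(m/2) / sqrt(Var X₁ · Var Y₁ · (1 - Corr(X₁,Y₁)²))`. -/
theorem integral_bound_ratio_pow
    (m : ℝ) (hm : 0 < m) :
    ∃ C : ℝ, 0 < C ∧
      ∀ (n : ℕ) (M₁ M₂ : Fin n → ℝ), M₁ ≠ 0 → M₂ ≠ 0 →
        |corr (stdGaussianPi n) (linForm M₁) (linForm M₂)| < 1 →
        ∀ p : ℝ, 1 < p →
          (∫ x, (max |linForm M₁ x| |linForm M₂ x|) ^ (m - 2)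
              * (min |linForm M₁ x| |linForm M₂ x|
                  / max |linForm M₁ x| |linForm M₂ x|) ^ (p - 1) ∂(stdGaussianPi n))
            ≤ C * (max (variance (linForm M₁) (stdGaussianPi n))
                    (variance (linForm M₂) (stdGaussianPi n))) ^ (m / 2)
              / Real.sqrt (variance (linForm M₁) (stdGaussianPi n)
                  * variance (linForm M₂) (stdGaussianPi n)
                  * (1 - corr (stdGaussianPi n) (linForm M₁) (linForm M₂) ^ 2))
              / p := by
  exact ⟨2 ^ (m / 2 + 1) * Gamma (m / 2) / π, by positivity, fun n M₁ M₂ hM₁ hM₂ hcorr p hp =>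
    (integral_bound_ratio_pow_general (hasGaussianLaw_prodMk_linForm M₁ M₂) (integral_linForm M₁)
      (integral_linForm M₂) (variance_linForm_ne_zero hM₁) (variance_linForm_ne_zero hM₂) hcorr hm
      (zero_lt_one.trans hp)).2⟩
end
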